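/- Let ϱ > 0 be real, d ≥ 2 an integer, and define λ_k^ϱ := e^{−2/ϱ²}·ϱ^{d−1}·Γ((d+1)/2)·I_{k+(d−1)/2}(2/ϱ²) for k = 0, 1, 2, …, where I_ν(z) := ∑_{j=0}^{∞} (z/2)^{ν+2j}/(j!·Γ(j+ν+1)) is the modified Bessel function of the first kind. Then for every k ≥ 0 one has ϱ²·(k+(d+1)/2)·λ_{k+1}^ϱ < λ_k^ϱ. -/

import Mathlib

/-!
Comparing power series termwise gives the classical recurrence
`(z / 2) I_ν(z) = (ν + 1) I_{ν+1}(z) + (z / 2) I_{ν+2}(z)`. For `ν > -1` and `z > 0` the last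
summand is positive, so `(ν + 1) I_{ν+1}(z) < (z / 2) I_ν(z)`. The theorem is this inequality at
`ν = k + (d - 1) / 2` and `z / 2 = ϱ⁻²`, multiplied by the factors common to all coefficients.
-/

open Real

/-- The modified Bessel function of the first kind, defined by its power series. -/
noncomputable def modifiedBesselI (ν z : ℝ) : ℝ :=
  ∑' j : ℕ, (z / 2) ^ (ν + 2 * (j : ℝ)) / ((Nat.factorial j : ℝ) * Real.Gamma ((j : ℝ) + ν + 1))

section ModifiedBessel

open Filter

/-- The `j`-th term of the power series of the modified Bessel function `I_ν(z)`. Since `Real.Gamma`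
vanishes at its poles, division by zero gives these terms the value `0` they have by convention. -/
noncomputable def modifiedBesselITerm (ν z : ℝ) (j : ℕ) : ℝ :=
  (z / 2) ^ (ν + 2 * (j : ℝ)) / ((Nat.factorial j : ℝ) * Real.Gamma ((j : ℝ) + ν + 1))

variable {ν z : ℝ}

lemma modifiedBesselITerm_pos {j : ℕ} (hz : 0 < z) (hj : 0 < (j : ℝ) + ν + 1) :
    0 < modifiedBesselITerm ν z j := by
  have : 0 < Gamma ((j : ℝ) + ν + 1) := Gamma_pos_of_pos hj
  unfold modifiedBesselITerm
  positivity

lemma mul_modifiedBesselITerm_add_one (hz : z ≠ 0) (j : ℕ) :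
    (j + ν + 1) * modifiedBesselITerm (ν + 1) z j = z / 2 * modifiedBesselITerm ν z j := by
  have hpow : (z / 2) ^ (ν + 1 + 2 * (j : ℝ)) = (z / 2) ^ (ν + 2 * (j : ℝ)) * (z / 2) := by
    rw [← rpow_add_one (by positivity), add_right_comm]
  unfold modifiedBesselITerm
  rw [hpow, ← add_assoc]
  rcases eq_or_ne ((j : ℝ) + ν + 1) 0 with hj | hj
  · simp [hj]
  · rw [Gamma_add_one hj]
    field_simp

lemma succ_mul_modifiedBesselITerm_succ (hz : z ≠ 0) (j : ℕ) :
    (j + 1) * modifiedBesselITerm ν z (j + 1) = z / 2 * modifiedBesselITerm (ν + 1) z j := by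
  have hpow : (z / 2) ^ (ν + 2 * ((j + 1 : ℕ) : ℝ)) =
      (z / 2) ^ (ν + 1 + 2 * (j : ℝ)) * (z / 2) := by
    rw [← rpow_add_one (by positivity)]
    push_cast
    ring_nf
  have hΓ : ((j + 1 : ℕ) : ℝ) + ν + 1 = j + (ν + 1) + 1 := by
    push_cast
    ring
  unfold modifiedBesselITerm
  rw [hpow, hΓ, Nat.factorial_succ]
  push_cast
  field_simp

lemma modifiedBesselITerm_succ_div {j : ℕ} (hz : 0 < z) (hj : 0 < (j : ℝ) + ν + 1) :
    modifiedBesselITerm ν z (j + 1) / modifiedBesselITerm ν z j =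
      (z / 2) ^ 2 / ((j + 1) * (j + ν + 1)) := by
  rw [div_eq_div_iff (modifiedBesselITerm_pos hz hj).ne' (by positivity)]
  linear_combination
    (j + ν + 1) * succ_mul_modifiedBesselITerm_succ (ν := ν) hz.ne' j +
      z / 2 * mul_modifiedBesselITerm_add_one (ν := ν) hz.ne' j

lemma summable_modifiedBesselITerm (ν : ℝ) (hz : 0 < z) :
    Summable (modifiedBesselITerm ν z) := by
  have hpos : ∀ᶠ j : ℕ in atTop, 0 < (j : ℝ) + ν + 1 := by
    filter_upwards [tendsto_natCast_atTop_atTop.eventually_gt_atTop (-(ν + 1))] with j hj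
    linarith
  have hdenom : Tendsto (fun j : ℕ ↦ ((j : ℝ) + 1) * (j + ν + 1)) atTop atTop := by
    simp only [add_assoc]
    exact (tendsto_atTop_add_const_right _ _ tendsto_natCast_atTop_atTop).atTop_mul_atTop₀
      (tendsto_atTop_add_const_right _ _ tendsto_natCast_atTop_atTop)
  have hne : ∀ᶠ j in atTop, modifiedBesselITerm ν z j ≠ 0 :=
    hpos.mono fun j hj ↦ (modifiedBesselITerm_pos hz hj).ne'
  refine summable_of_ratio_test_tendsto_lt_one zero_lt_one hne
    ((hdenom.const_div_atTop ((z / 2) ^ 2)).congr' ?_)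
  filter_upwards [hpos] with j hj
  rw [← norm_div, modifiedBesselITerm_succ_div hz hj, norm_of_nonneg (by positivity)]

lemma hasSum_modifiedBesselI (ν : ℝ) (hz : 0 < z) :
    HasSum (modifiedBesselITerm ν z) (modifiedBesselI ν z) :=
  (summable_modifiedBesselITerm ν hz).hasSum

lemma modifiedBesselI_pos (hν : -1 < ν) (hz : 0 < z) : 0 < modifiedBesselI ν z := by
  have hterm (j : ℕ) : 0 < modifiedBesselITerm ν z j :=
    modifiedBesselITerm_pos hz (by linarith [j.cast_nonneg (α := ℝ)])
  exact (summable_modifiedBesselITerm ν hz).tsum_pos (fun j ↦ (hterm j).le) 0 (hterm 0)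

lemma hasSum_natCast_mul_modifiedBesselITerm (ν : ℝ) (hz : 0 < z) :
    HasSum (fun j : ℕ ↦ j * modifiedBesselITerm ν z j) (z / 2 * modifiedBesselI (ν + 1) z) := by
  rw [← hasSum_nat_add_iff' 1]
  simpa [succ_mul_modifiedBesselITerm_succ hz.ne'] using
    (hasSum_modifiedBesselI (ν + 1) hz).mul_left (z / 2)

theorem modifiedBesselI_recurrence (ν : ℝ) (hz : 0 < z) :
    z / 2 * modifiedBesselI ν z =
      (ν + 1) * modifiedBesselI (ν + 1) z + z / 2 * modifiedBesselI (ν + 1 + 1) z := by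
  have hterm (j : ℕ) : z / 2 * modifiedBesselITerm ν z j =
      (ν + 1) * modifiedBesselITerm (ν + 1) z j + j * modifiedBesselITerm (ν + 1) z j := by
    rw [← mul_modifiedBesselITerm_add_one hz.ne']
    ring
  refine ((hasSum_modifiedBesselI ν hz).mul_left (z / 2)).unique ?_
  simp only [hterm]
  exact ((hasSum_modifiedBesselI (ν + 1) hz).mul_left (ν + 1)).add
    (hasSum_natCast_mul_modifiedBesselITerm (ν + 1) hz)

theorem mul_modifiedBesselI_add_one_lt (hν : -1 < ν) (hz : 0 < z) :
    (ν + 1) * modifiedBesselI (ν + 1) z < z / 2 * modifiedBesselI ν z := by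
  have hpos : 0 < modifiedBesselI (ν + 1 + 1) z := modifiedBesselI_pos (by linarith) hz
  rw [modifiedBesselI_recurrence ν hz]
  exact lt_add_of_pos_right _ (by positivity)

end ModifiedBessel

theorem gaussian_coefficient_inequality_general (ϱ : ℝ) (hϱ : 0 < ϱ) (d : ℝ) (hd : -1 < d)
    (lam : ℕ → ℝ)
    (hlam : ∀ k : ℕ, lam k =
      exp (-2 / ϱ ^ 2) * ϱ ^ (d - 1) * Gamma ((d + 1) / 2) *
        modifiedBesselI (k + (d - 1) / 2) (2 / ϱ ^ 2)) (k : ℕ) :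
    ϱ ^ 2 * (k + (d + 1) / 2) * lam (k + 1) < lam k := by
  set ν : ℝ := k + (d - 1) / 2
  set z : ℝ := 2 / ϱ ^ 2
  set C : ℝ := exp (-2 / ϱ ^ 2) * ϱ ^ (d - 1) * Gamma ((d + 1) / 2)
  have : 0 < Gamma ((d + 1) / 2) := Gamma_pos_of_pos (by linarith)
  have hC : 0 < C := by positivity
  have hz : 0 < z := by positivity
  have hϱz : ϱ ^ 2 * (z / 2) = 1 := by
    simp only [z]
    field_simp
  have hνd : k + (d + 1) / 2 = ν + 1 := by ring
  have hνk : ((k + 1 : ℕ) : ℝ) + (d - 1) / 2 = ν + 1 := by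
    push_cast
    ring
  have hν_gt : -1 < ν := by linarith [k.cast_nonneg (α := ℝ)]
  calc ϱ ^ 2 * (k + (d + 1) / 2) * lam (k + 1)
      = C * ϱ ^ 2 * ((ν + 1) * modifiedBesselI (ν + 1) z) := by
        rw [hlam, hνk, hνd]
        ring
    _ < C * ϱ ^ 2 * (z / 2 * modifiedBesselI ν z) :=
        mul_lt_mul_of_pos_left (mul_modifiedBesselI_add_one_lt hν_gt hz) (mul_pos hC (pow_pos hϱ 2))
    _ = lam k := by
        rw [hlam]
        linear_combination C * modifiedBesselI ν z * hϱz

theorem gaussian_coefficient_inequality (ϱ : ℝ) (hϱ : 0 < ϱ) (d : ℕ) (hd : 2 ≤ d)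
    (lam : ℕ → ℝ)
    (hlam : ∀ k : ℕ, lam k =
      Real.exp (-2 / ϱ ^ 2) * ϱ ^ (d - 1) * Real.Gamma (((d : ℝ) + 1) / 2) *
        modifiedBesselI ((k : ℝ) + ((d : ℝ) - 1) / 2) (2 / ϱ ^ 2)) :
    ∀ k : ℕ, ϱ ^ 2 * ((k : ℝ) + ((d : ℝ) + 1) / 2) * lam (k + 1) < lam k := by
  refine gaussian_coefficient_inequality_general ϱ hϱ d (by linarith [d.cast_nonneg (α := ℝ)]) lam
    fun k ↦ ?_
  rw [hlam, ← Nat.cast_pred (by lia), rpow_natCast]
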